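/- Let (E, ρ, ⟨·,·⟩_E, [·,·]_E) be a Courant algebroid, ∇ a Courant algebroid connection with torsion operator T and Gualtieri torsion 3-form T_G(e,e',e'') = ⟨T(e,e'), e''⟩_E, and let R̃ be the tensor R̃(e,e')e'' = ∇_e∇_{e'}e'' − ∇_{e'}∇_e e'' − ∇_{[e,e']_E}e'' + ∇_{𝐋(e,e')}e'' + ⟨e', ∇_{e''}∇_{e_λ}e − ∇_{e_λ}∇_{e''}e − ∇_{[e'',e_λ]_E}e⟩_E · g_E^{−1}(e^λ), where 𝐋(e,e') = ⟨∇_{e_κ}e, e'⟩_E · g_E^{−1}(e^κ). Then R̃ satisfies the algebraic Bianchi identity: the cyclic sum over (e,e',e'') of R̃(e,e')e'' equals the cyclic sum over (e,e',e'') of [(∇_e T_G)(e', e'', e_λ)·g_E^{−1}(e^λ) − T(e, T(e',e''))] minus (∇_{e_λ}T_G)(e,e',e'')·g_E^{−1}(e^λ). In particular, if T = 0 then R̃(e,e')e'' + R̃(e',e'')e + R̃(e'',e)e' = 0. -/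

import Mathlib

/-!
An algebraic model of Courant algebroids over a smooth manifold `M`:
`M` is modelled by its commutative `ℝ`-algebra of smooth functions `C = C^∞(M)`,
vector fields are `ℝ`-linear derivations of `C`, and the module of sections `Γ(E)`
is modelled by a `C`-module `E`.  Local frames are encoded by finite families of
sections together with duality (w.r.t. the pairing) and spanning conditions.
-/

open scoped BigOperators

noncomputable section

/-- Vector fields on `M`, modelled as `ℝ`-linear derivations of `C = C^∞(M)`. -/
abbrev VectorField (C : Type) [CommRing C] [Algebra ℝ C] := Derivation ℝ C C

/-- A Courant algebroid `(E, ρ, ⟨·,·⟩_E, [·,·]_E)` over `M`. -/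
structure CourantAlgebroid (C : Type) [CommRing C] [Algebra ℝ C]
    (E : Type) [AddCommGroup E] [Module C E] [Module ℝ E] [IsScalarTower ℝ C E] where
  /-- The anchor `ρ ∈ Hom(E, TM)`. -/
  anchor : E →ₗ[C] VectorField C
  /-- The bracket `[·,·]_E` on sections. -/
  bracket : E → E → E
  add_left : ∀ e₁ e₂ e', bracket (e₁ + e₂) e' = bracket e₁ e' + bracket e₂ e'
  smul_real_left : ∀ (r : ℝ) (e e' : E), bracket (r • e) e' = r • bracket e e'
  add_right : ∀ e e₁ e₂, bracket e (e₁ + e₂) = bracket e e₁ + bracket e e₂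
  smul_real_right : ∀ (r : ℝ) (e e' : E), bracket e (r • e') = r • bracket e e'
  /-- The Leibniz rule `[e, f·e']_E = f·[e,e']_E + (ρ(e).f)·e'`. -/
  leibniz_rule : ∀ (f : C) (e e' : E),
    bracket e (f • e') = f • bracket e e' + anchor e f • e'
  /-- The Leibniz identity `[e,[e',e'']] = [[e,e'],e''] + [e',[e,e'']]`. -/
  leibniz_identity : ∀ e e' e'',
    bracket e (bracket e' e'') = bracket (bracket e e') e'' + bracket e' (bracket e e'')
  /-- The nondegenerate symmetric fiberwise pairing `⟨·,·⟩_E`. -/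
  pairing : E → E → C
  pairing_symm : ∀ e e', pairing e e' = pairing e' e
  pairing_add : ∀ e₁ e₂ e', pairing (e₁ + e₂) e' = pairing e₁ e' + pairing e₂ e'
  pairing_smul : ∀ (f : C) (e e' : E), pairing (f • e) e' = f * pairing e e'
  pairing_nondeg : ∀ e, (∀ e', pairing e e' = 0) → e = 0
  /-- Axiom (iii): `⟨[e,e]_E, e'⟩_E = (1/2)·ρ(e').⟨e,e⟩_E`. -/
  ax_symmetric : ∀ e e',
    pairing (bracket e e) e' = (2:ℝ)⁻¹ • anchor e' (pairing e e)
  /-- Axiom (iv): `ρ(e).⟨e',e''⟩_E = ⟨[e,e']_E,e''⟩_E + ⟨e',[e,e'']_E⟩_E`. -/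
  ax_invariance : ∀ e e' e'',
    anchor e (pairing e' e'') = pairing (bracket e e') e'' + pairing e' (bracket e e'')

variable {C : Type} [CommRing C] [Algebra ℝ C]
variable {E : Type} [AddCommGroup E] [Module C E] [Module ℝ E] [IsScalarTower ℝ C E]

/-- A Courant algebroid connection `∇` on `E`. -/
structure CourantConnection (A : CourantAlgebroid C E) where
  cd : E → E → E
  add_left : ∀ e₁ e₂ e', cd (e₁ + e₂) e' = cd e₁ e' + cd e₂ e'
  smul_left : ∀ (f : C) (e e' : E), cd (f • e) e' = f • cd e e'
  add_right : ∀ e e₁ e₂, cd e (e₁ + e₂) = cd e e₁ + cd e e₂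
  smul_right : ∀ (f : C) (e e' : E), cd e (f • e') = f • cd e e' + A.anchor e f • e'
  pairing_compat : ∀ e e' e'',
    A.anchor e (A.pairing e' e'') = A.pairing (cd e e') e'' + A.pairing e' (cd e e'')

/-- A local frame `(e_λ)` of `E` together with the metric-dualized dual frame
`g_E⁻¹(e^λ)`: `⟨g_E⁻¹(e^λ), e_μ⟩_E = δ^λ_μ` and every section expands in the frame. -/
structure CourantFrame (A : CourantAlgebroid C E) (ι : Type) [Fintype ι] [DecidableEq ι] where
  vec : ι → E
  dual : ι → E
  dual_pair : ∀ i j, A.pairing (dual i) (vec j) = if i = j then (1 : C) else 0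
  total : ∀ e : E, ∑ i, A.pairing (dual i) e • vec i = e

variable {ι : Type} [Fintype ι] [DecidableEq ι]

/-- The torsion operator
`T(e,e') = ∇_e e' − ∇_{e'} e − [e,e']_E + ⟨∇_{e_λ} e, e'⟩_E · g_E⁻¹(e^λ)`. -/
def torsionOp (A : CourantAlgebroid C E) (nab : CourantConnection A)
    (F : CourantFrame A ι) (e e' : E) : E :=
  nab.cd e e' - nab.cd e' e - A.bracket e e'
    + ∑ i, A.pairing (nab.cd (F.vec i) e) e' • F.dual i

/-- The Gualtieri torsion `T_G(e,e',e'') = ⟨T(e,e'), e''⟩_E`. -/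
def torsionG (A : CourantAlgebroid C E) (nab : CourantConnection A)
    (F : CourantFrame A ι) (e e' e'' : E) : C :=
  A.pairing (torsionOp A nab F e e') e''

/-- The covariant derivative `(∇_e T_G)(a,b,c)` of the Gualtieri torsion 3-form,
obtained by extending `∇` to the tensor algebra of `E`. -/
def covTorsionG (A : CourantAlgebroid C E) (nab : CourantConnection A)
    (F : CourantFrame A ι) (e a b c : E) : C :=
  A.anchor e (torsionG A nab F a b c)
    - torsionG A nab F (nab.cd e a) b c
    - torsionG A nab F a (nab.cd e b) c
    - torsionG A nab F a b (nab.cd e c)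

/-- The map `𝐋(e,e') = ⟨∇_{e_κ} e, e'⟩_E · g_E⁻¹(e^κ)`. -/
def Lmap (A : CourantAlgebroid C E) (nab : CourantConnection A)
    (F : CourantFrame A ι) (e e' : E) : E :=
  ∑ i, A.pairing (nab.cd (F.vec i) e) e' • F.dual i

/-- The Hohm–Zwiebach-type tensor
`R̃(e,e')e'' = ∇_e∇_{e'}e'' − ∇_{e'}∇_e e'' − ∇_{[e,e']}e'' + ∇_{𝐋(e,e')}e''
  + ⟨e', ∇_{e''}∇_{e_λ}e − ∇_{e_λ}∇_{e''}e − ∇_{[e'',e_λ]}e⟩_E · g_E⁻¹(e^λ)`. -/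
def Rtilde (A : CourantAlgebroid C E) (nab : CourantConnection A)
    (F : CourantFrame A ι) (e e' e'' : E) : E :=
  nab.cd e (nab.cd e' e'') - nab.cd e' (nab.cd e e'')
    - nab.cd (A.bracket e e') e'' + nab.cd (Lmap A nab F e e') e''
    + ∑ i, A.pairing e'
        (nab.cd e'' (nab.cd (F.vec i) e) - nab.cd (F.vec i) (nab.cd e'' e)
          - nab.cd (A.bracket e'' (F.vec i)) e) • F.dual i

/-!
Put `⟦e, e'⟧ = [e, e']_E − 𝐋(e, e')`.  The symmetric parts of `[·,·]_E` and of `𝐋` are both the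
gradient of `⟨e, e'⟩_E`, so `⟦·,·⟧` is skew-symmetric, and `T` is the torsion of `∇` with respect
to `⟦·,·⟧` in the classical sense `∇_e e' − ∇_{e'} e − ⟦e, e'⟧`.  The classical first Bianchi
identity thus holds up to the Jacobiator of `⟦·,·⟧`.  Pairing this Jacobiator with `w`, the Leibniz
identity of `[·,·]_E` turns it into `−(∇_w T_G)(e, e', e'')` minus exactly the cyclic sum of the
curvature terms by which `R̃` differs from the classical curvature.
-/

theorem cyclic_sum_curvature_eq_of_skew_bracket {V : Type*} [AddCommGroup V] {D B T : V → V → V}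
    (D_sub_left : ∀ x x' y, D (x - x') y = D x y - D x' y)
    (D_sub_right : ∀ x y y', D x (y - y') = D x y - D x y')
    (B_sub_right : ∀ x y y', B x (y - y') = B x y - B x y')
    (B_swap : ∀ x y, B x y = -B y x)
    (hT : ∀ x y, T x y = D x y - D y x - B x y) (x y z : V) :
    (D x (D y z) - D y (D x z) - D (B x y) z) + (D y (D z x) - D z (D y x) - D (B y z) x)
        + (D z (D x y) - D x (D z y) - D (B z x) y)
      = ((D x (T y z) - T (D x y) z - T y (D x z) - T x (T y z))
        + (D y (T z x) - T (D y z) x - T z (D y x) - T y (T z x))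
        + (D z (T x y) - T (D z x) y - T x (D z y) - T z (T x y)))
        + (B x (B y z) + B y (B z x) + B z (B x y)) := by
  have T_swap : ∀ u v, T u v = -T v u := fun u v => by rw [hT, hT, B_swap u v]; abel
  have T_sub_right : ∀ u v v', T u (v - v') = T u v - T u v' := fun u v v' => by
    simp only [hT, D_sub_left, D_sub_right, B_sub_right]; abel
  have T_T : ∀ u v v', T u (T v v') = T u (D v v') - T u (D v' v)
      - (D u (B v v') - D (B v v') u - B u (B v v')) := fun u v v' => by
    rw [hT v v', T_sub_right, T_sub_right, hT u (B v v')]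
  have D_T : ∀ u v v', D u (T v v') = D u (D v v') - D u (D v' v) - D u (B v v') :=
    fun u v v' => by rw [hT, D_sub_right, D_sub_right]
  simp only [T_T, D_T, T_swap (D _ _)]
  abel

namespace CourantAlgebroid

variable (A : CourantAlgebroid C E)

theorem pairing_add_right (x y z : E) :
    A.pairing x (y + z) = A.pairing x y + A.pairing x z := by
  rw [A.pairing_symm, A.pairing_add, A.pairing_symm y, A.pairing_symm z]

theorem pairing_smul_right (f : C) (x y : E) : A.pairing x (f • y) = f * A.pairing x y := by
  rw [A.pairing_symm, A.pairing_smul, A.pairing_symm y]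

/-- The pairing `⟨·,·⟩_E` bundled as a `C`-bilinear form, so that Mathlib's lemmas on linear maps
apply to it. -/
def pairingForm : LinearMap.BilinForm C E :=
  LinearMap.mk₂ C A.pairing A.pairing_add A.pairing_smul A.pairing_add_right A.pairing_smul_right

theorem pairing_zero_left (x : E) : A.pairing 0 x = 0 :=
  A.pairingForm.map_zero₂ x

theorem pairing_sub_left (x y z : E) : A.pairing (x - y) z = A.pairing x z - A.pairing y z :=
  A.pairingForm.map_sub₂ x y z

theorem pairing_sub_right (x y z : E) : A.pairing x (y - z) = A.pairing x y - A.pairing x z :=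
  (A.pairingForm x).map_sub y z

theorem pairing_ext {x y : E} (h : ∀ w, A.pairing x w = A.pairing y w) : x = y :=
  sub_eq_zero.mp <| A.pairing_nondeg _ fun w => by rw [A.pairing_sub_left, h w, sub_self]

theorem bracket_sub_right (x y z : E) :
    A.bracket x (y - z) = A.bracket x y - A.bracket x z :=
  (AddMonoidHom.mk' (A.bracket x) (A.add_right x)).map_sub y z

theorem pairing_bracket_add_swap (x y w : E) :
    A.pairing (A.bracket x y) w + A.pairing (A.bracket y x) w = A.anchor w (A.pairing x y) := by
  have polarized := A.ax_symmetric (x + y) w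
  simp only [A.add_left, A.add_right, A.pairing_add, A.pairing_add_right, map_add, smul_add,
    A.ax_symmetric, A.pairing_symm y x] at polarized
  have halves : (2 : ℝ)⁻¹ • A.anchor w (A.pairing x y) + (2 : ℝ)⁻¹ • A.anchor w (A.pairing x y)
      = A.anchor w (A.pairing x y) := by
    rw [← add_smul]; norm_num
  linear_combination polarized + halves

theorem anchor_bracket_pairing (x y a b : E) :
    A.anchor (A.bracket x y) (A.pairing a b)
      = A.anchor x (A.anchor y (A.pairing a b)) - A.anchor y (A.anchor x (A.pairing a b)) := by
  have leibniz_left : ∀ u v, A.pairing (A.bracket x (A.bracket y u)) v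
      = A.pairing (A.bracket (A.bracket x y) u) v + A.pairing (A.bracket y (A.bracket x u)) v :=
    fun u v => by rw [A.leibniz_identity, A.pairing_add]
  simp only [A.ax_invariance, map_add]
  linear_combination -leibniz_left a b - leibniz_left b a
    + A.pairing_symm (A.bracket x (A.bracket y b)) a
    - A.pairing_symm (A.bracket (A.bracket x y) b) a
    - A.pairing_symm (A.bracket y (A.bracket x b)) a

theorem pairing_cyclic_sum_bracket_bracket (x y z w : E) :
    A.pairing (A.bracket x (A.bracket y z)) w + A.pairing (A.bracket y (A.bracket z x)) w
        + A.pairing (A.bracket z (A.bracket x y)) w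
      = A.anchor w (A.anchor y (A.pairing x z) + A.pairing z (A.bracket x y)) := by
  have leibniz : A.pairing (A.bracket x (A.bracket y z)) w
      = A.pairing (A.bracket (A.bracket x y) z) w + A.pairing (A.bracket y (A.bracket x z)) w := by
    rw [A.leibniz_identity, A.pairing_add]
  have outer_swap := A.pairing_bracket_add_swap z (A.bracket x y) w
  have inner_swap := congrArg (A.anchor y) (A.pairing_bracket_add_swap x z w)
  have swap_along_bracket := A.pairing_bracket_add_swap x z (A.bracket y w)
  rw [A.anchor_bracket_pairing] at swap_along_bracket
  rw [map_add] at inner_swap ⊢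
  linear_combination leibniz + outer_swap + inner_swap - swap_along_bracket
    - A.ax_invariance y (A.bracket x z) w - A.ax_invariance y (A.bracket z x) w

end CourantAlgebroid

namespace CourantFrame

variable {A : CourantAlgebroid C E} (F : CourantFrame A ι)

theorem pairing_sum_smul_dual (φ : E →ₗ[C] C) (w : E) :
    A.pairing (∑ i, φ (F.vec i) • F.dual i) w = φ w :=
  calc A.pairing (∑ i, φ (F.vec i) • F.dual i) w
      = ∑ i, φ (F.vec i) * A.pairing (F.dual i) w := by
        change A.pairingForm _ w = _
        simp only [map_sum, map_smul, LinearMap.sum_apply, LinearMap.smul_apply, smul_eq_mul]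
        rfl
    _ = φ (∑ i, A.pairing (F.dual i) w • F.vec i) := by
        simp only [map_sum, map_smul, smul_eq_mul, mul_comm]
    _ = φ w := by rw [F.total]

theorem sum_pairing_smul_dual (x : E) : ∑ i, A.pairing x (F.vec i) • F.dual i = x :=
  A.pairing_ext <| F.pairing_sum_smul_dual (A.pairingForm x)

end CourantFrame

namespace CourantConnection

variable {A : CourantAlgebroid C E} (nab : CourantConnection A)

theorem cd_sub_left (x y z : E) : nab.cd (x - y) z = nab.cd x z - nab.cd y z :=
  (AddMonoidHom.mk' (fun u => nab.cd u z) fun u v => nab.add_left u v z).map_sub x y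

theorem cd_sub_right (x y z : E) : nab.cd x (y - z) = nab.cd x y - nab.cd x z :=
  (AddMonoidHom.mk' (nab.cd x) (nab.add_right x)).map_sub y z

/-- The naive curvature operator `∇_e ∇_{e'} e'' − ∇_{e'} ∇_e e'' − ∇_{[e,e']_E} e''`.  It is not
`C`-linear in `e`, since `[·,·]_E` is not skew-symmetric. -/
def curvature (x y z : E) : E :=
  nab.cd x (nab.cd y z) - nab.cd y (nab.cd x z) - nab.cd (A.bracket x y) z

variable (F : CourantFrame A ι)

theorem pairing_Lmap (x y w : E) : A.pairing (Lmap A nab F x y) w = A.pairing (nab.cd w x) y :=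
  F.pairing_sum_smul_dual
    { toFun := fun v => A.pairing (nab.cd v x) y
      map_add' := fun u v => by rw [nab.add_left, A.pairing_add]
      map_smul' := fun f v => by rw [nab.smul_left, A.pairing_smul]; rfl } w

theorem Lmap_sub_right (x y z : E) :
    Lmap A nab F x (y - z) = Lmap A nab F x y - Lmap A nab F x z := by
  simp only [Lmap, A.pairing_sub_right, sub_smul, Finset.sum_sub_distrib]

theorem pairing_bracket_Lmap (x y z w : E) :
    A.pairing (A.bracket x (Lmap A nab F y z)) w
      = A.anchor x (A.pairing (nab.cd w y) z) - A.pairing (nab.cd (A.bracket x w) y) z := by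
  rw [← nab.pairing_Lmap F y z w, ← nab.pairing_Lmap F y z (A.bracket x w)]
  exact eq_sub_of_add_eq (A.ax_invariance x _ w).symm

/-- The skew-symmetric bracket `⟦e, e'⟧ = [e, e']_E − 𝐋(e, e')`, with respect to which `T` is the
classical torsion of `∇`. -/
def skewBracket (x y : E) : E :=
  A.bracket x y - Lmap A nab F x y

theorem pairing_skewBracket (x y w : E) :
    A.pairing (nab.skewBracket F x y) w
      = A.pairing (A.bracket x y) w - A.pairing (nab.cd w x) y := by
  rw [skewBracket, A.pairing_sub_left, nab.pairing_Lmap]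

theorem pairing_bracket_skewBracket (x y z w : E) :
    A.pairing (A.bracket x (nab.skewBracket F y z)) w
      = A.pairing (A.bracket x (A.bracket y z)) w - A.anchor x (A.pairing (nab.cd w y) z)
        + A.pairing (nab.cd (A.bracket x w) y) z := by
  rw [skewBracket, A.bracket_sub_right, A.pairing_sub_left, pairing_bracket_Lmap, ← sub_add]

theorem skewBracket_swap (x y : E) : nab.skewBracket F x y = -nab.skewBracket F y x := by
  rw [← zero_sub]
  refine A.pairing_ext fun w => ?_
  rw [A.pairing_sub_left, A.pairing_zero_left, nab.pairing_skewBracket, nab.pairing_skewBracket]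
  linear_combination A.pairing_bracket_add_swap x y w + nab.pairing_compat w x y
    + A.pairing_symm x (nab.cd w y)

theorem skewBracket_sub_right (x y z : E) :
    nab.skewBracket F x (y - z) = nab.skewBracket F x y - nab.skewBracket F x z := by
  simp only [skewBracket, A.bracket_sub_right, nab.Lmap_sub_right]
  abel

theorem torsionOp_eq_sub_skewBracket (x y : E) :
    torsionOp A nab F x y = nab.cd x y - nab.cd y x - nab.skewBracket F x y := by
  rw [torsionOp, skewBracket, Lmap]
  abel

theorem torsionG_apply (x y z : E) :
    torsionG A nab F x y z = A.pairing (nab.cd x y) z - A.pairing (nab.cd y x) z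
      - A.pairing (A.bracket x y) z + A.pairing (nab.cd z x) y := by
  rw [torsionG, torsionOp_eq_sub_skewBracket, A.pairing_sub_left, A.pairing_sub_left,
    pairing_skewBracket]
  ring

theorem torsionG_rotate (x y z : E) : torsionG A nab F x y z = torsionG A nab F y z x := by
  rw [torsionG_apply, torsionG_apply]
  linear_combination -A.pairing_bracket_add_swap x y z - A.ax_invariance y x z
    + nab.pairing_compat y x z - nab.pairing_compat z x y
    + A.pairing_symm x (nab.cd y z) - A.pairing_symm x (nab.cd z y)
    - A.pairing_symm x (A.bracket y z)

theorem anchor_pairing_add_pairing_bracket (x y z : E) :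
    A.anchor y (A.pairing x z) + A.pairing z (A.bracket x y)
      = A.pairing z (nab.cd x y) + A.pairing x (nab.cd y z) + A.pairing y (nab.cd z x)
        - torsionG A nab F x y z := by
  rw [torsionG_apply, nab.pairing_compat]
  linear_combination A.pairing_symm z (A.bracket x y) - A.pairing_symm z (nab.cd x y)
    - A.pairing_symm y (nab.cd z x)

theorem covTorsionG_eq_pairing (x y z w : E) :
    covTorsionG A nab F x y z w = A.pairing (nab.cd x (torsionOp A nab F y z)
      - torsionOp A nab F (nab.cd x y) z - torsionOp A nab F y (nab.cd x z)) w := by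
  rw [covTorsionG, torsionG, nab.pairing_compat, A.pairing_sub_left, A.pairing_sub_left]
  simp only [torsionG]
  ring

theorem sum_covTorsionG_smul_dual (x y z : E) :
    ∑ i, covTorsionG A nab F x y z (F.vec i) • F.dual i
      = nab.cd x (torsionOp A nab F y z)
        - torsionOp A nab F (nab.cd x y) z - torsionOp A nab F y (nab.cd x z) := by
  simp only [covTorsionG_eq_pairing, F.sum_pairing_smul_dual]

theorem Rtilde_eq_skewBracket (x y z : E) :
    Rtilde A nab F x y z
      = nab.cd x (nab.cd y z) - nab.cd y (nab.cd x z) - nab.cd (nab.skewBracket F x y) z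
        + ∑ i, A.pairing y (nab.curvature z (F.vec i) x) • F.dual i := by
  rw [skewBracket, nab.cd_sub_left, ← sub_add]
  rfl

theorem pairing_skewBracket_skewBracket_add_curvature (x y z w : E) :
    A.pairing (nab.skewBracket F x (nab.skewBracket F y z)) w
        + A.pairing z (nab.curvature x w y)
      = A.pairing (A.bracket x (A.bracket y z)) w - A.anchor w (A.pairing z (nab.cd x y))
        + torsionG A nab F y z (nab.cd w x)
        + (A.pairing (nab.cd w z) (nab.cd x y) - A.pairing (nab.cd w y) (nab.cd x z)
          - A.pairing (nab.cd w x) (nab.cd y z) + A.pairing (nab.cd w x) (nab.cd z y)) := by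
  have outer : A.pairing (nab.skewBracket F x (nab.skewBracket F y z)) w
      = A.pairing (A.bracket x (A.bracket y z)) w - A.anchor x (A.pairing (nab.cd w y) z)
        + A.pairing (nab.cd (A.bracket x w) y) z
        - A.pairing (nab.cd w x) (nab.skewBracket F y z) := by
    rw [pairing_skewBracket, pairing_bracket_skewBracket]
  have torsion : torsionG A nab F y z (nab.cd w x)
      = A.pairing (nab.cd w x) (nab.cd y z) - A.pairing (nab.cd w x) (nab.cd z y)
        - A.pairing (nab.cd w x) (nab.skewBracket F y z) := by
    rw [torsionG, A.pairing_symm, torsionOp_eq_sub_skewBracket, A.pairing_sub_right,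
      A.pairing_sub_right]
  rw [outer, torsion, curvature, A.pairing_sub_right, A.pairing_sub_right, nab.pairing_compat x,
    nab.pairing_compat w]
  linear_combination A.pairing_symm z (nab.cd x (nab.cd w y))
    - A.pairing_symm z (nab.cd (A.bracket x w) y)

theorem pairing_cyclic_sum_skewBracket_skewBracket (x y z w : E) :
    A.pairing (nab.skewBracket F x (nab.skewBracket F y z)) w
        + A.pairing (nab.skewBracket F y (nab.skewBracket F z x)) w
        + A.pairing (nab.skewBracket F z (nab.skewBracket F x y)) w
      = -covTorsionG A nab F w x y z - (A.pairing y (nab.curvature z w x)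
        + A.pairing z (nab.curvature x w y) + A.pairing x (nab.curvature y w z)) := by
  have leibniz := A.pairing_cyclic_sum_bracket_bracket x y z w
  rw [nab.anchor_pairing_add_pairing_bracket F, map_sub, map_add, map_add] at leibniz
  rw [covTorsionG, nab.torsionG_rotate F (nab.cd w x), ← nab.torsionG_rotate F z x (nab.cd w y)]
  linear_combination leibniz + nab.pairing_skewBracket_skewBracket_add_curvature F x y z w
    + nab.pairing_skewBracket_skewBracket_add_curvature F y z x w
    + nab.pairing_skewBracket_skewBracket_add_curvature F z x y w

theorem cyclic_sum_skewBracket_skewBracket (x y z : E) :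
    nab.skewBracket F x (nab.skewBracket F y z) + nab.skewBracket F y (nab.skewBracket F z x)
        + nab.skewBracket F z (nab.skewBracket F x y)
      = -∑ i, covTorsionG A nab F (F.vec i) x y z • F.dual i
        - (∑ i, A.pairing y (nab.curvature z (F.vec i) x) • F.dual i
          + ∑ i, A.pairing z (nab.curvature x (F.vec i) y) • F.dual i
          + ∑ i, A.pairing x (nab.curvature y (F.vec i) z) • F.dual i) := by
  rw [← F.sum_pairing_smul_dual (nab.skewBracket F x _ + _ + _)]
  simp only [A.pairing_add, pairing_cyclic_sum_skewBracket_skewBracket, sub_smul, neg_smul,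
    add_smul, Finset.sum_sub_distrib, Finset.sum_neg_distrib, Finset.sum_add_distrib]

theorem cyclic_sum_Rtilde (x y z : E) :
    Rtilde A nab F x y z + Rtilde A nab F y z x + Rtilde A nab F z x y
      = ((∑ i, covTorsionG A nab F x y z (F.vec i) • F.dual i
            - torsionOp A nab F x (torsionOp A nab F y z))
          + (∑ i, covTorsionG A nab F y z x (F.vec i) • F.dual i
            - torsionOp A nab F y (torsionOp A nab F z x))
          + (∑ i, covTorsionG A nab F z x y (F.vec i) • F.dual i
            - torsionOp A nab F z (torsionOp A nab F x y)))
        - ∑ i, covTorsionG A nab F (F.vec i) x y z • F.dual i := by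
  have bianchi := cyclic_sum_curvature_eq_of_skew_bracket nab.cd_sub_left nab.cd_sub_right
    (nab.skewBracket_sub_right F) (nab.skewBracket_swap F) (nab.torsionOp_eq_sub_skewBracket F)
    x y z
  have jacobiator := nab.cyclic_sum_skewBracket_skewBracket F x y z
  simp only [Rtilde_eq_skewBracket, sum_covTorsionG_smul_dual]
  linear_combination (norm := abel) bianchi + jacobiator

end CourantConnection

/-- **STATEMENT 14.** The algebraic Bianchi identity for `R̃`: the cyclic sum over
`(e,e',e'')` of `R̃(e,e')e''` equals the cyclic sum of
`(∇_e T_G)(e',e'',e_λ)·g_E⁻¹(e^λ) − T(e, T(e',e''))` minus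
`(∇_{e_λ} T_G)(e,e',e'')·g_E⁻¹(e^λ)`.  In particular if `T = 0` then the cyclic sum
of `R̃` vanishes. -/
theorem Rtilde_algebraic_Bianchi
    (C : Type) [CommRing C] [Algebra ℝ C]
    (E : Type) [AddCommGroup E] [Module C E] [Module ℝ E] [IsScalarTower ℝ C E]
    (A : CourantAlgebroid C E) (nab : CourantConnection A)
    (ι : Type) [Fintype ι] [DecidableEq ι] (F : CourantFrame A ι) :
    (∀ e e' e'' : E,
      Rtilde A nab F e e' e'' + Rtilde A nab F e' e'' e + Rtilde A nab F e'' e e'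
        = ((∑ i, covTorsionG A nab F e e' e'' (F.vec i) • F.dual i
              - torsionOp A nab F e (torsionOp A nab F e' e''))
          + (∑ i, covTorsionG A nab F e' e'' e (F.vec i) • F.dual i
              - torsionOp A nab F e' (torsionOp A nab F e'' e))
          + (∑ i, covTorsionG A nab F e'' e e' (F.vec i) • F.dual i
              - torsionOp A nab F e'' (torsionOp A nab F e e')))
          - ∑ i, covTorsionG A nab F (F.vec i) e e' e'' • F.dual i) ∧
    ((∀ e e', torsionOp A nab F e e' = 0) →
      ∀ e e' e'' : E,
        Rtilde A nab F e e' e'' + Rtilde A nab F e' e'' e + Rtilde A nab F e'' e e' = 0) := by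
  have bianchi := nab.cyclic_sum_Rtilde F
  refine ⟨bianchi, fun torsion_free e e' e'' => ?_⟩
  have covTorsionG_eq_zero : ∀ a b c d, covTorsionG A nab F a b c d = 0 := fun a b c d => by
    simp only [covTorsionG, torsionG, torsion_free, A.pairing_zero_left, map_zero, sub_zero]
  simp only [bianchi, covTorsionG_eq_zero, torsion_free, zero_smul, Finset.sum_const_zero,
    sub_zero, add_zero]
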